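/- Let P = abcdef be a simple hexagon, counterclockwise, whose reflex vertices are exactly a and d. Then either both diagonals ae and bd lie inside P, or both diagonals ac and df lie inside P. -/

import Mathlib

open scoped BigOperators

/-- Points in the plane. -/
abbrev Pt := ℝ × ℝ

/-- 2×2 determinant (cross product) of two plane vectors. -/
noncomputable def det2 (p q : Pt) : ℝ := p.1 * q.2 - p.2 * q.1

/-- Open half-plane strictly to the left of the directed line from `p` to `q`. -/
def Lhp (p q : Pt) : Set Pt := {x | 0 < det2 (q - p) (x - p)}

/-- Open half-plane strictly to the right of the directed line from `p` to `q`. -/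
def Rhp (p q : Pt) : Set Pt := {x | det2 (q - p) (x - p) < 0}

/-- The boundary of the polygon with vertices `v 0, …, v (n-1)`:
the union of its (cyclically consecutive) edges. -/
def polyBoundary {n : ℕ} [NeZero n] (v : Fin n → Pt) : Set Pt :=
  ⋃ i : Fin n, segment ℝ (v i) (v (i + 1))

/-- `v` describes a simple polygon: at least 3 distinct vertices, and two distinct
edges may only meet at a common endpoint. -/
def IsSimplePolygon {n : ℕ} [NeZero n] (v : Fin n → Pt) : Prop :=
  3 ≤ n ∧ Function.Injective v ∧
    ∀ i j : Fin n, i ≠ j →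
      segment ℝ (v i) (v (i + 1)) ∩ segment ℝ (v j) (v (j + 1)) ⊆
        ({v i, v (i + 1)} ∩ {v j, v (j + 1)} : Set Pt)

/-- The interior of the polygon: the union of the bounded connected components of the
complement of the boundary. -/
def polyInterior {n : ℕ} [NeZero n] (v : Fin n → Pt) : Set Pt :=
  {x | x ∉ polyBoundary v ∧
    Bornology.IsBounded (connectedComponentIn (polyBoundary v)ᶜ x)}

/-- The (closed) polygonal region: interior together with boundary. -/
def polyRegion {n : ℕ} [NeZero n] (v : Fin n → Pt) : Set Pt :=
  polyBoundary v ∪ polyInterior v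

/-- Twice the signed area of the polygon. -/
noncomputable def signedArea2 {n : ℕ} [NeZero n] (v : Fin n → Pt) : ℝ :=
  ∑ i : Fin n, det2 (v i) (v (i + 1))

/-- The vertices are listed in counterclockwise order. -/
def IsCCW {n : ℕ} [NeZero n] (v : Fin n → Pt) : Prop := 0 < signedArea2 v

/-- The vertex `v i` of a counterclockwise polygon is strictly convex
(interior angle strictly less than 180°). -/
def StrictlyConvexAt {n : ℕ} [NeZero n] (v : Fin n → Pt) (i : Fin n) : Prop :=
  0 < det2 (v i - v (i - 1)) (v (i + 1) - v i)

/-- The vertex `v i` of a counterclockwise polygon is reflex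
(interior angle greater than or equal to 180°). -/
def ReflexAt {n : ℕ} [NeZero n] (v : Fin n → Pt) (i : Fin n) : Prop :=
  det2 (v i - v (i - 1)) (v (i + 1) - v i) ≤ 0

/-- The wedge of vertex `v i`:  `L(v⁻, v) ∩ R(v⁺, v) ∩ interior P`. -/
def Wedge {n : ℕ} [NeZero n] (v : Fin n → Pt) (i : Fin n) : Set Pt :=
  Lhp (v (i - 1)) (v i) ∩ Rhp (v (i + 1)) (v i) ∩ polyInterior v

/-- `x` sees `y` inside the polygon `v`: the segment `xy` is contained in the region. -/
def Sees {n : ℕ} [NeZero n] (v : Fin n → Pt) (x y : Pt) : Prop :=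
  segment ℝ x y ⊆ polyRegion v

/-- The kernel of the polygon: the points of the region that see every point of it. -/
def polyKernel {n : ℕ} [NeZero n] (v : Fin n → Pt) : Set Pt :=
  {x ∈ polyRegion v | ∀ y ∈ polyRegion v, segment ℝ x y ⊆ polyRegion v}

/-- The open triangle on three points. -/
def openTriangle (a b c : Pt) : Set Pt := interior (convexHull ℝ {a, b, c})

/-- `a b c d` (in counterclockwise order) form a strictly convex quadrilateral. -/
def StrictConvexQuad (a b c d : Pt) : Prop :=
  0 < det2 (b - a) (c - b) ∧ 0 < det2 (c - b) (d - c) ∧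
    0 < det2 (d - c) (a - d) ∧ 0 < det2 (a - d) (b - a)

/-- The closed region of a quadrilateral cell. -/
noncomputable def quadSet (q : Pt × Pt × Pt × Pt) : Set Pt :=
  convexHull ℝ {q.1, q.2.1, q.2.2.1, q.2.2.2}

/-- The closed region of a triangular cell. -/
noncomputable def triSet (t : Pt × Pt × Pt) : Set Pt :=
  convexHull ℝ {t.1, t.2.1, t.2.2}

/-- The vertices of a quadrilateral cell. -/
noncomputable def quadVerts (q : Pt × Pt × Pt × Pt) : Finset Pt :=
  {q.1, q.2.1, q.2.2.1, q.2.2.2}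

/-- The vertices of a triangular cell. -/
noncomputable def triVerts (t : Pt × Pt × Pt) : Finset Pt :=
  {t.1, t.2.1, t.2.2}

/-- A strictly convex quadrangulation of a finite planar point set `S`:
a decomposition of `conv S` into strictly convex quadrilaterals and at most one
(nondegenerate) triangle, with pairwise disjoint interiors, whose vertex set contains
`S`, and such that no point of `S` is interior to a cell. -/
structure ConvexQuadrangulation (S : Finset Pt) where
  quads : Finset (Pt × Pt × Pt × Pt)
  tris : Finset (Pt × Pt × Pt)
  tris_card : tris.card ≤ 1
  quads_convex : ∀ q ∈ quads, StrictConvexQuad q.1 q.2.1 q.2.2.1 q.2.2.2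
  tris_nondeg : ∀ t ∈ tris, 0 < det2 (t.2.1 - t.1) (t.2.2 - t.2.1)
  covers : ((⋃ q ∈ quads, quadSet q) ∪ ⋃ t ∈ tris, triSet t) = convexHull ℝ (S : Set Pt)
  cells_disjoint : ((quadSet '' quads) ∪ (triSet '' tris)).Pairwise
    fun A B => interior A ∩ interior B = ∅
  verts_cover : (S : Set Pt) ⊆
    ((quads.biUnion quadVerts ∪ tris.biUnion triVerts : Finset Pt) : Set Pt)
  no_pt_in_quad_interior : ∀ q ∈ quads, ∀ p ∈ S, p ∉ interior (quadSet q)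
  no_pt_in_tri_interior : ∀ t ∈ tris, ∀ p ∈ S, p ∉ interior (triSet t)

/-- The Steiner points of a quadrangulation: vertices of the decomposition not in `S`. -/
noncomputable def steinerPoints (S : Finset Pt) (Q : ConvexQuadrangulation S) : Finset Pt :=
  (Q.quads.biUnion quadVerts ∪ Q.tris.biUnion triVerts) \ S

/-!
The diagonal `ad` cuts the hexagon into the quadrilaterals `abcd` and `defa`. Since the edges `ab`
and `cd` do not cross, `abcd` can be cut along `bd` or along `ac`, that is, `abd` or `acd` is
positively oriented; likewise `defa` can be cut along `ea` or along `df`. If the only available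
choices were `ac` together with `ea`, then adding up the angles at `a` from `b` through `c`, `d`,
`e` to `f` would give at least a full turn, and with `a` reflex this forces the edges `fa` and `ab`
to overlap; the combination `bd`, `df` is excluded in the same way at `d`. For each remaining choice
the four triangles glue to a bounded set whose frontier consists of edges of the hexagon, and such a
set lies in the polygonal region.
-/

open Set Topology

/-- The orientation of the triple `p, q, r`: twice the signed area of the triangle `pqr`, positive
when it is counterclockwise. The formula makes `StrictlyConvexAt` and `ReflexAt` conditions on `ori`
of three consecutive vertices by unfolding. -/
noncomputable def ori (p q r : Pt) : ℝ := det2 (q - p) (r - q)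

/-- The quadrilateral `pqrs`, convex or not, cut along its diagonal `qs` into two closed
triangles. -/
noncomputable def splitQuad (p q r s : Pt) : Set Pt := triSet (p, q, s) ∪ triSet (q, r, s)

section Orientation

variable {a b c d e f : Pt}

lemma ori_eq (p q r : Pt) :
    ori p q r = (q.1 - p.1) * (r.2 - q.2) - (q.2 - p.2) * (r.1 - q.1) := rfl

lemma ori_rotate (p q r : Pt) : ori q r p = ori p q r := by
  simp only [ori_eq]; ring

lemma ori_swap (p q r : Pt) : ori q p r = -ori p q r := by
  simp only [ori_eq]; ring

lemma ori_self_right (p q : Pt) : ori p q q = 0 := by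
  simp only [ori_eq]; ring

lemma ori_self_left (p q : Pt) : ori p q p = 0 := by
  simp only [ori_eq]; ring

lemma ori_add_ori (p q r s : Pt) : ori p q r + ori p r s = ori p q s + ori q r s := by
  simp only [ori_eq]; ring

lemma ori_add_ori_add_ori (p q r x : Pt) :
    ori q r x + ori r p x + ori p q x = ori p q r := by
  simp only [ori_eq]; ring

lemma ori_plucker (p a b c d : Pt) :
    ori p a b * ori p c d - ori p a c * ori p b d + ori p a d * ori p b c = 0 := by
  simp only [ori_eq]; ring

lemma ori_barycentric (p q r x : Pt) :
    ori p q r • x = ori q r x • p + ori r p x • q + ori p q x • r := by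
  ext <;> simp only [ori_eq, Prod.fst_add, Prod.snd_add, Prod.smul_fst, Prod.smul_snd,
    smul_eq_mul] <;> ring

lemma ori_combo (p q x y : Pt) {u t : ℝ} (hut : u + t = 1) :
    ori p q (u • x + t • y) = u * ori p q x + t * ori p q y := by
  obtain rfl : u = 1 - t := by linarith
  simp only [ori_eq, Prod.fst_add, Prod.snd_add, Prod.smul_fst, Prod.smul_snd, smul_eq_mul]
  ring

lemma continuous_ori (p q : Pt) : Continuous (ori p q) := by
  unfold ori det2; fun_prop

lemma convex_setOf_ori_nonneg (p q : Pt) : Convex ℝ {x | 0 ≤ ori p q x} := by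
  intro x (hx : 0 ≤ ori p q x) y (hy : 0 ≤ ori p q y) u t hu ht hut
  change 0 ≤ ori p q (u • x + t • y)
  rw [ori_combo p q x y hut]
  positivity

lemma sameRay_of_ori (hbf : ori a b f = 0) (hb : ori a b e < 0) (hf : 0 < ori a e f) :
    SameRay ℝ (b - a) (f - a) := by
  refine Or.inr (Or.inr ⟨ori a e f, -ori a b e, hf, neg_pos.2 hb, ?_⟩)
  have key : ori a e f • (b - a) - -ori a b e • (f - a) = ori a b f • (e - a) := by
    ext <;> simp only [ori_eq, Prod.fst_sub, Prod.snd_sub, Prod.smul_fst, Prod.smul_snd,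
      smul_eq_mul] <;> ring
  rwa [hbf, zero_smul, sub_eq_zero] at key

lemma not_disjoint_segment_of_ori (habc : 0 < ori a b c) (habd : ori a b d ≤ 0)
    (hacd : ori a c d ≤ 0) (hbcd : 0 ≤ ori b c d) :
    ¬ Disjoint (segment ℝ a b) (segment ℝ c d) := by
  set D := ori a b c - ori a b d
  have hD_pos : 0 < D := by linarith
  have habd' : 0 ≤ -ori a b d := by linarith
  have hacd' : 0 ≤ -ori a c d := by linarith
  have hsum : ori b c d + -ori a c d = D := by linarith [ori_add_ori a b c d]
  have hcross : ori b c d • a + -ori a c d • b = -ori a b d • c + ori a b c • d := by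
    ext <;> simp only [ori_eq, Prod.fst_add, Prod.snd_add, Prod.smul_fst, Prod.smul_snd,
      smul_eq_mul] <;> ring
  refine not_disjoint_iff.2 ⟨D⁻¹ • (ori b c d • a + -ori a c d • b), ?_, ?_⟩
  · refine ⟨D⁻¹ * ori b c d, D⁻¹ * -ori a c d, by positivity, by positivity, ?_, ?_⟩
    · rw [← mul_add, hsum, inv_mul_cancel₀ hD_pos.ne']
    · simp only [smul_add, smul_smul]
  · refine ⟨D⁻¹ * -ori a b d, D⁻¹ * ori a b c, by positivity, by positivity, ?_, ?_⟩
    · rw [← mul_add, neg_add_eq_sub, inv_mul_cancel₀ hD_pos.ne']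
    · simp only [hcross, smul_add, smul_smul]

end Orientation

section Triangle

variable {p q r x : Pt}

lemma triSet_rotate (p q r : Pt) : triSet (q, r, p) = triSet (p, q, r) := by
  rw [triSet, triSet, insert_comm p q, pair_comm p r]

lemma isBounded_triSet (t : Pt × Pt × Pt) : Bornology.IsBounded (triSet t) :=
  isBounded_convexHull.2 (toFinite _).isBounded

lemma segment_subset_triSet (p q r : Pt) : segment ℝ p q ⊆ triSet (p, q, r) :=
  segment_subset_convexHull (by simp) (by simp)

lemma mem_triSet_iff (h : 0 < ori p q r) :
    x ∈ triSet (p, q, r) ↔ 0 ≤ ori p q x ∧ 0 ≤ ori q r x ∧ 0 ≤ ori r p x := by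
  constructor
  · have hconvex := (convex_setOf_ori_nonneg p q).inter
      ((convex_setOf_ori_nonneg q r).inter (convex_setOf_ori_nonneg r p))
    refine fun hx ↦ convexHull_min ?_ hconvex hx
    rintro y (rfl | rfl | rfl)
    · exact ⟨(ori_self_left _ _).ge, h.le.trans_eq (ori_rotate _ _ _).symm,
        (ori_self_right _ _).ge⟩
    · exact ⟨(ori_self_right _ _).ge, (ori_self_left _ _).ge,
        h.le.trans_eq (ori_rotate _ _ _)⟩
    · exact ⟨h.le, (ori_self_right _ _).ge, (ori_self_left _ _).ge⟩
  · rintro ⟨hpq, hqr, hrp⟩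
    refine mem_convexHull_of_exists_fintype
      (fun i ↦ (ori p q r)⁻¹ * ![ori q r x, ori r p x, ori p q x] i) ![p, q, r] ?_ ?_ ?_ ?_
    · intro i
      have : 0 ≤ ![ori q r x, ori r p x, ori p q x] i := by fin_cases i <;> assumption
      positivity
    · rw [← Finset.mul_sum, Fin.sum_univ_three]
      exact (congrArg _ (ori_add_ori_add_ori p q r x)).trans (inv_mul_cancel₀ h.ne')
    · intro i
      fin_cases i <;> simp
    · simp only [mul_smul, ← Finset.smul_sum, Fin.sum_univ_three]
      exact (congrArg _ (ori_barycentric p q r x)).symm.trans (inv_smul_smul₀ h.ne' x)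

lemma triSet_mem_nhds (hpq : 0 < ori p q x) (hqr : 0 < ori q r x) (hrp : 0 < ori r p x) :
    triSet (p, q, r) ∈ 𝓝 x := by
  have h : 0 < ori p q r := by linarith [ori_add_ori_add_ori p q r x]
  filter_upwards [(continuous_ori p q).continuousAt.eventually_const_lt hpq,
    (continuous_ori q r).continuousAt.eventually_const_lt hqr,
    (continuous_ori r p).continuousAt.eventually_const_lt hrp] with y hpq hqr hrp
  exact (mem_triSet_iff h).2 ⟨hpq.le, hqr.le, hrp.le⟩

lemma mem_segment_of_mem_triSet (h : 0 < ori p q r) (hx : x ∈ triSet (p, q, r))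
    (hpq : ori p q x = 0) : x ∈ segment ℝ p q := by
  obtain ⟨-, hqr, hrp⟩ := (mem_triSet_iff h).1 hx
  have hsum : ori q r x + ori r p x = ori p q r := by
    linarith [ori_add_ori_add_ori p q r x]
  have hcombo : ori q r x • p + ori r p x • q = ori p q r • x := by
    rw [ori_barycentric p q r x, hpq, zero_smul, add_zero]
  refine ⟨(ori p q r)⁻¹ * ori q r x, (ori p q r)⁻¹ * ori r p x, by positivity, by positivity,
    ?_, ?_⟩
  · rw [← mul_add, hsum, inv_mul_cancel₀ h.ne']
  · rw [mul_smul, mul_smul, ← smul_add, hcombo, inv_smul_smul₀ h.ne']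

lemma frontier_triSet_subset (h : 0 < ori p q r) :
    frontier (triSet (p, q, r)) ⊆ segment ℝ p q ∪ segment ℝ q r ∪ segment ℝ r p := by
  have hclosed : IsClosed (triSet (p, q, r)) := (toFinite _).isClosed_convexHull ℝ
  intro x hx
  have hxT := hclosed.frontier_subset hx
  obtain ⟨hpq, hqr, hrp⟩ := (mem_triSet_iff h).1 hxT
  rcases hpq.eq_or_lt with hpq | hpq
  · exact Or.inl (Or.inl (mem_segment_of_mem_triSet h hxT hpq.symm))
  rcases hqr.eq_or_lt with hqr | hqr
  · rw [← triSet_rotate] at hxT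
    exact Or.inl (Or.inr (mem_segment_of_mem_triSet (by rwa [ori_rotate]) hxT hqr.symm))
  rcases hrp.eq_or_lt with hrp | hrp
  · rw [triSet_rotate r p q] at hxT
    exact Or.inr (mem_segment_of_mem_triSet (by rwa [← ori_rotate]) hxT hrp.symm)
  · exact absurd (mem_interior_iff_mem_nhds.2 (triSet_mem_nhds hpq hqr hrp)) hx.2

end Triangle

section Gluing

variable {p q r s : Pt} {A A' B : Set Pt}

lemma openSegment_subset_interior_union (hr : 0 < ori p q r) (hs : 0 < ori q p s) :
    openSegment ℝ p q ⊆ interior (triSet (p, q, r) ∪ triSet (q, p, s)) := by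
  rintro x ⟨u, t, hu, ht, hut, rfl⟩
  have hqr : 0 < ori q r (u • p + t • q) := by
    rw [ori_combo q r p q hut, ori_self_left, ori_rotate]; positivity
  have hrp : 0 < ori r p (u • p + t • q) := by
    rw [ori_combo r p p q hut, ori_self_right, ← ori_rotate]; positivity
  have hps : 0 < ori p s (u • p + t • q) := by
    rw [ori_combo p s p q hut, ori_self_left, ori_rotate]; positivity
  have hsq : 0 < ori s q (u • p + t • q) := by
    rw [ori_combo s q p q hut, ori_self_right, ← ori_rotate]; positivity
  rw [mem_interior_iff_mem_nhds]
  filter_upwards [(continuous_ori q r).continuousAt.eventually_const_lt hqr,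
    (continuous_ori r p).continuousAt.eventually_const_lt hrp,
    (continuous_ori p s).continuousAt.eventually_const_lt hps,
    (continuous_ori s q).continuousAt.eventually_const_lt hsq] with y hqr hrp hps hsq
  rcases le_total 0 (ori p q y) with hpq | hqp
  · exact Or.inl ((mem_triSet_iff hr).2 ⟨hpq, hqr.le, hrp.le⟩)
  · exact Or.inr ((mem_triSet_iff hs).2 ⟨by rw [ori_swap]; linarith, hps.le, hsq.le⟩)

lemma frontier_union_subset_of_common_edge (hr : 0 < ori p q r) (hs : 0 < ori q p s)
    (hrA : triSet (p, q, r) ⊆ A) (hsA' : triSet (q, p, s) ⊆ A') (hp : p ∈ B) (hq : q ∈ B)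
    (hA : frontier A ⊆ B ∪ segment ℝ p q) (hA' : frontier A' ⊆ B ∪ segment ℝ p q) :
    frontier (A ∪ A') ⊆ B := by
  intro x hx
  have hxB : x ∈ B ∪ segment ℝ p q :=
    (frontier_union_subset A A' hx).elim (fun h ↦ hA h.1) (fun h ↦ hA' h.2)
  rw [← insert_endpoints_openSegment] at hxB
  rcases hxB with hxB | rfl | rfl | hx_open
  · exact hxB
  · exact hp
  · exact hq
  · have hx_int : x ∈ interior (A ∪ A') := interior_mono (union_subset_union hrA hsA')
      (openSegment_subset_interior_union hr hs hx_open)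
    exact absurd hx (disjoint_interior_frontier.notMem_of_mem_left hx_int)

lemma isBounded_splitQuad (p q r s : Pt) : Bornology.IsBounded (splitQuad p q r s) :=
  (isBounded_triSet _).union (isBounded_triSet _)

lemma diagonal_subset_splitQuad (p q r s : Pt) : segment ℝ q s ⊆ splitQuad p q r s := by
  rw [splitQuad, ← triSet_rotate p q s]
  exact (segment_subset_triSet q s p).trans subset_union_left

lemma frontier_splitQuad_subset (hpqs : 0 < ori p q s) (hqrs : 0 < ori q r s) :
    frontier (splitQuad p q r s) ⊆
      segment ℝ p q ∪ segment ℝ q r ∪ segment ℝ r s ∪ segment ℝ s p := by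
  refine frontier_union_subset_of_common_edge (p := q) (q := s) (r := p) (s := r)
    (by rwa [ori_rotate]) (by rwa [← ori_rotate]) (triSet_rotate p q s).subset
    (triSet_rotate s q r).symm.subset ?_ ?_ ?_ ?_
  · exact Or.inl (Or.inl (Or.inl (right_mem_segment ℝ p q)))
  · exact Or.inl (Or.inr (right_mem_segment ℝ r s))
  · refine (frontier_triSet_subset hpqs).trans ?_
    grind
  · refine (frontier_triSet_subset hqrs).trans ?_
    rw [segment_symm ℝ s q]
    grind

end Gluing

section Region

lemma subset_of_isPreconnected_of_disjoint_frontier {X : Type*} [TopologicalSpace X] {s t : Set X}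
    (ht : IsPreconnected t) (hdisj : Disjoint t (frontier s)) (hne : (t ∩ s).Nonempty) : t ⊆ s := by
  have hcover : t ⊆ interior s ∪ interior sᶜ :=
    compl_frontier_eq_union_interior (s := s) ▸ hdisj.subset_compl_right
  have hsep : Disjoint (interior s) (interior sᶜ) :=
    disjoint_compl_right.mono interior_subset interior_subset
  have hmeet : (t ∩ interior s).Nonempty := by
    obtain ⟨x, hxt, hxs⟩ := hne
    exact ⟨x, hxt, (hcover hxt).resolve_right fun h ↦ interior_subset h hxs⟩
  exact (ht.subset_left_of_subset_union isOpen_interior isOpen_interior hsep hcover hmeet).trans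
    interior_subset

variable {n : ℕ} [NeZero n] {v : Fin n → Pt}

lemma segment_subset_polyBoundary (v : Fin n → Pt) (i : Fin n) :
    segment ℝ (v i) (v (i + 1)) ⊆ polyBoundary v :=
  subset_iUnion (fun i ↦ segment ℝ (v i) (v (i + 1))) i

lemma subset_polyRegion_of_frontier_subset {W : Set Pt} (hW : Bornology.IsBounded W)
    (hfrontier : frontier W ⊆ polyBoundary v) : W ⊆ polyRegion v := by
  intro x hxW
  by_cases hxB : x ∈ polyBoundary v
  · exact Or.inl hxB
  refine Or.inr ⟨hxB, hW.subset ?_⟩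
  refine subset_of_isPreconnected_of_disjoint_frontier isPreconnected_connectedComponentIn ?_
    ⟨x, mem_connectedComponentIn hxB, hxW⟩
  exact (subset_compl_iff_disjoint_right.1 (connectedComponentIn_subset _ _)).mono_right hfrontier

lemma IsSimplePolygon.disjoint_edges (h : IsSimplePolygon v) {i j : Fin n} (hij : i ≠ j)
    (hi : i + 1 ≠ j) (hj : j + 1 ≠ i) :
    Disjoint (segment ℝ (v i) (v (i + 1))) (segment ℝ (v j) (v (j + 1))) := by
  obtain ⟨-, hinj, hedges⟩ := h
  refine disjoint_left.2 fun x hxi hxj ↦ ?_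
  obtain ⟨rfl | rfl, h' | h'⟩ := hedges i j hij ⟨hxi, hxj⟩
  · exact hij (hinj h')
  · exact hj (hinj h').symm
  · exact hi (hinj h')
  · exact hij (add_right_cancel (hinj h'))

lemma IsSimplePolygon.inter_consecutive_edges_subset (h : IsSimplePolygon v) (i : Fin n) :
    segment ℝ (v i) (v (i + 1)) ∩ segment ℝ (v (i + 1)) (v (i + 1 + 1)) ⊆ {v (i + 1)} := by
  obtain ⟨hn, hinj, hedges⟩ := h
  obtain ⟨k, rfl⟩ := Nat.exists_eq_add_of_le' hn
  have hne : i ≠ i + 1 := by simp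
  have hne' : i ≠ i + 1 + 1 := by
    simp [add_assoc, Fin.ext_iff, Fin.val_add, Nat.mod_eq_of_lt (by lia : 2 < k + 3)]
  intro x hx
  obtain ⟨rfl | hxi, hx'⟩ := hedges i (i + 1) hne hx
  · rcases hx' with h' | h'
    · exact h'
    · exact absurd (hinj h') hne'
  · exact hxi

end Region

section Hexagon

variable {a b c d e f : Pt}

lemma ori_pos_or_of_disjoint (habc : 0 < ori a b c) (hbcd : 0 ≤ ori b c d)
    (h : Disjoint (segment ℝ a b) (segment ℝ c d)) : 0 < ori a b d ∨ 0 < ori a c d := by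
  by_contra! ⟨habd, hacd⟩
  exact not_disjoint_segment_of_ori habc habd hacd hbcd h

lemma not_sameRay_of_inter_segment_subset {E : Type*} [AddCommGroup E] [Module ℝ E] {a b f : E}
    (hab : a ≠ b) (haf : a ≠ f) (h : segment ℝ f a ∩ segment ℝ a b ⊆ {a}) :
    ¬ SameRay ℝ (b - a) (f - a) := by
  intro hray
  rcases wbtw_total_of_sameRay_vsub_left (x := a) (y := b) (z := f) hray with hb | hf
  · exact hab (h ⟨hb.symm.mem_segment, right_mem_segment ℝ a b⟩).symm
  · exact haf (h ⟨left_mem_segment ℝ f a, hf.mem_segment⟩).symm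

lemma sameRay_of_reflex (habc : 0 < ori a b c) (hcde : ori c d e ≤ 0) (hefa : 0 < ori e f a)
    (hfab : ori f a b ≤ 0) (hacd : 0 < ori a c d) (hdea : 0 < ori d e a)
    (habd : ori a b d ≤ 0) (hdfa : ori d f a ≤ 0) : SameRay ℝ (b - a) (f - a) := by
  rw [ori_rotate] at hefa hdea hdfa
  rw [← ori_rotate] at hfab
  have hace : 0 < ori a c e := by linarith [ori_add_ori a c d e]
  -- Two Plücker relations at `a` replace the sum of the angles from `b` through `c, d, e` to `f`.
  have habe : ori a b e < 0 := by
    refine neg_of_mul_neg_left ?_ hacd.le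
    linarith [ori_plucker a b c d e, mul_pos habc hdea,
      mul_nonpos_of_nonpos_of_nonneg habd hace.le]
  have habf : 0 ≤ ori a b f := by
    refine nonneg_of_mul_nonneg_left ?_ hdea
    linarith [ori_plucker a b d e f, mul_nonpos_of_nonpos_of_nonneg habd hefa.le,
      mul_nonneg_of_nonpos_of_nonpos habe.le hdfa]
  exact sameRay_of_ori (hfab.antisymm habf) habe hefa

lemma ori_pos_or_of_inter_segment_subset (habc : 0 < ori a b c) (hcde : ori c d e ≤ 0)
    (hefa : 0 < ori e f a) (hfab : ori f a b ≤ 0) (h : segment ℝ f a ∩ segment ℝ a b ⊆ {a})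
    (hacd : 0 < ori a c d) (hdea : 0 < ori d e a) : 0 < ori a b d ∨ 0 < ori d f a := by
  have hab : a ≠ b := by
    rintro rfl
    simp [ori_eq] at habc
  have haf : a ≠ f := by
    rintro rfl
    simp [ori_eq] at hefa
  by_contra! ⟨habd, hdfa⟩
  exact not_sameRay_of_inter_segment_subset hab haf h
    (sameRay_of_reflex habc hcde hefa hfab hacd hdea habd hdfa)

lemma hexagon_edges_subset_polyBoundary (v : Fin 6 → Pt) :
    segment ℝ (v 0) (v 1) ⊆ polyBoundary v ∧ segment ℝ (v 1) (v 2) ⊆ polyBoundary v ∧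
    segment ℝ (v 2) (v 3) ⊆ polyBoundary v ∧ segment ℝ (v 3) (v 4) ⊆ polyBoundary v ∧
    segment ℝ (v 4) (v 5) ⊆ polyBoundary v ∧ segment ℝ (v 5) (v 0) ⊆ polyBoundary v :=
  have hedge := segment_subset_polyBoundary v
  ⟨hedge 0, hedge 1, hedge 2, hedge 3, hedge 4, hedge 5⟩

variable {v : Fin 6 → Pt}

lemma ae_bd_subset_polyRegion (habd : 0 < ori (v 0) (v 1) (v 3)) (hbcd : 0 < ori (v 1) (v 2) (v 3))
    (hdea : 0 < ori (v 3) (v 4) (v 0)) (hefa : 0 < ori (v 4) (v 5) (v 0)) :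
    segment ℝ (v 0) (v 4) ⊆ polyRegion v ∧ segment ℝ (v 1) (v 3) ⊆ polyRegion v := by
  obtain ⟨hab, hbc, hcd, hde, hef, hfa⟩ := hexagon_edges_subset_polyBoundary v
  have hsub : splitQuad (v 0) (v 1) (v 2) (v 3) ∪ splitQuad (v 3) (v 4) (v 5) (v 0) ⊆
      polyRegion v := by
    refine subset_polyRegion_of_frontier_subset
      ((isBounded_splitQuad ..).union (isBounded_splitQuad ..))
      (frontier_union_subset_of_common_edge (p := v 3) (q := v 0) (r := v 1) (s := v 4)
        (by rwa [← ori_rotate]) (by rwa [← ori_rotate])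
        (by rw [← triSet_rotate]; exact subset_union_left)
        (by rw [← triSet_rotate]; exact subset_union_left)
        (hde (left_mem_segment ..)) (hab (left_mem_segment ..)) ?_ ?_)
    · refine (frontier_splitQuad_subset habd hbcd).trans ?_
      grind
    · refine (frontier_splitQuad_subset hdea hefa).trans ?_
      rw [segment_symm ℝ (v 0) (v 3)]
      grind
  obtain ⟨hbd, hea⟩ := union_subset_iff.1 hsub
  rw [segment_symm]
  exact ⟨(diagonal_subset_splitQuad ..).trans hea, (diagonal_subset_splitQuad ..).trans hbd⟩

lemma ac_df_subset_polyRegion (hacd : 0 < ori (v 0) (v 2) (v 3)) (habc : 0 < ori (v 0) (v 1) (v 2))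
    (hdfa : 0 < ori (v 3) (v 5) (v 0)) (hdef : 0 < ori (v 3) (v 4) (v 5)) :
    segment ℝ (v 0) (v 2) ⊆ polyRegion v ∧ segment ℝ (v 3) (v 5) ⊆ polyRegion v := by
  obtain ⟨hab, hbc, hcd, hde, hef, hfa⟩ := hexagon_edges_subset_polyBoundary v
  rw [← ori_rotate] at habc hacd hdef hdfa
  have hsub : splitQuad (v 1) (v 2) (v 3) (v 0) ∪ splitQuad (v 4) (v 5) (v 0) (v 3) ⊆
      polyRegion v := by
    refine subset_polyRegion_of_frontier_subset
      ((isBounded_splitQuad ..).union (isBounded_splitQuad ..))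
      (frontier_union_subset_of_common_edge (p := v 3) (q := v 0) (r := v 2) (s := v 5)
        (by rwa [ori_rotate]) (by rwa [ori_rotate])
        (by rw [triSet_rotate]; exact subset_union_right)
        (by rw [triSet_rotate]; exact subset_union_right)
        (hde (left_mem_segment ..)) (hab (left_mem_segment ..)) ?_ ?_)
    · refine (frontier_splitQuad_subset habc hacd).trans ?_
      grind
    · refine (frontier_splitQuad_subset hdef hdfa).trans ?_
      rw [segment_symm ℝ (v 0) (v 3)]
      grind
  obtain ⟨hca, hfd⟩ := union_subset_iff.1 hsub
  rw [segment_symm ℝ (v 0), segment_symm ℝ (v 3)]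
  exact ⟨(diagonal_subset_splitQuad ..).trans hca, (diagonal_subset_splitQuad ..).trans hfd⟩

end Hexagon

/-- Key claim of case `rccrcc`-2 of Theorem 7.  Let `abcdef` be a simple
counterclockwise hexagon whose reflex vertices are exactly `a` and `d`.  Then either
both diagonals `ae` and `bd` lie inside the hexagon, or both diagonals `ac` and `df`
do. -/
theorem hexagon_rccrcc_diagonals (v : Fin 6 → Pt)
    (hsimple : IsSimplePolygon v) (hccw : IsCCW v)
    (ha : ReflexAt v 0) (hd : ReflexAt v 3)
    (hb : StrictlyConvexAt v 1) (hc : StrictlyConvexAt v 2)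
    (he : StrictlyConvexAt v 4) (hf : StrictlyConvexAt v 5) :
    (segment ℝ (v 0) (v 4) ⊆ polyRegion v ∧ segment ℝ (v 1) (v 3) ⊆ polyRegion v) ∨
    (segment ℝ (v 0) (v 2) ⊆ polyRegion v ∧ segment ℝ (v 3) (v 5) ⊆ polyRegion v) := by
  have hab_cd := hsimple.disjoint_edges (i := 0) (j := 2) (by decide) (by decide) (by decide)
  have hde_fa := hsimple.disjoint_edges (i := 3) (j := 5) (by decide) (by decide) (by decide)
  have hfa_ab := hsimple.inter_consecutive_edges_subset 5
  have hcd_de := hsimple.inter_consecutive_edges_subset 2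
  have cut_abcd : 0 < ori (v 0) (v 1) (v 3) ∨ 0 < ori (v 0) (v 2) (v 3) :=
    ori_pos_or_of_disjoint hb (le_of_lt hc) hab_cd
  have cut_defa : 0 < ori (v 3) (v 4) (v 0) ∨ 0 < ori (v 3) (v 5) (v 0) :=
    ori_pos_or_of_disjoint he (le_of_lt hf) hde_fa
  have turn_at_a := ori_pos_or_of_inter_segment_subset hb hd hf ha hfa_ab
  have turn_at_d := ori_pos_or_of_inter_segment_subset he ha hc hd hcd_de
  have cuts_agree : 0 < ori (v 0) (v 1) (v 3) ∧ 0 < ori (v 3) (v 4) (v 0) ∨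
      0 < ori (v 0) (v 2) (v 3) ∧ 0 < ori (v 3) (v 5) (v 0) := by
    tauto
  rcases cuts_agree with ⟨habd, hdea⟩ | ⟨hacd, hdfa⟩
  · exact Or.inl (ae_bd_subset_polyRegion habd hc hdea hf)
  · exact Or.inr (ac_df_subset_polyRegion hacd hb hdfa he)
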